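/- arXiv:2305.13706 — 4 statements merged into one kernel-verified Lean document; each statement's English description precedes it below -/
import Mathlib

section
/- (Theorem 1, monotonicity of the Q function with respect to AoI states.) Suppose V is AoI-antitone. Then for every feasible action a, every state s = (τ, H), every device index n, and every τ'_n ≥ τ_n, letting s'_AoI = (τ'_(n), H) where τ'_(n) = (τ_1, …, τ'_n, …, τ_N) agrees with τ in all coordinates except the n-th, one has Q(s'_AoI, a) ≤ Q(s, a). -/
/-- AoI (Age-of-Information) state vector: each device's AoI is a positive natural. -/
abbrev AoI (N : ℕ) := Fin N → ℕ+

/-- Channel state matrix: entry `(n, m)` is the (quantized) state of the channel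
between device `n` and the destination on sub-channel `m`, one of `ĥ` levels. -/
abbrev Chan (N M hh : ℕ) := Fin N → Fin M → Fin hh

/-- A state of the MDP: a pair `s = (τ, H)`. -/
abbrev MDPState (N M hh : ℕ) := AoI N × Chan N M hh

/-- An action: `a n = some m` means device `n` transmits on channel `m`;
`a n = none` means device `n` is idle (`a_n = 0`). A device uses at most
one channel automatically since `a` is a function. -/
abbrev SchedAction (N M : ℕ) := Fin N → Option (Fin M)

/-- Feasibility: every channel `m` is used by exactly one device. -/
def Feasible {N M : ℕ} (a : SchedAction N M) : Prop :=
  ∀ m : Fin M, ∃! n : Fin N, a n = some m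

/-- Probability that device `n`'s AoI transition is the one encoded by the
success flags `b` (`b n = true` iff device `n`'s packet is received):
if `a n = some m`, success has probability `1 - p n m (H n m)` and failure
probability `p n m (H n m)`; an idle device surely fails. -/
def devProb {N M hh : ℕ} (p : Fin N → Fin M → Fin hh → ℝ)
    (H : Chan N M hh) (a : SchedAction N M) (b : Fin N → Bool) (n : Fin N) : ℝ :=
  match a n with
  | some m => if b n then 1 - p n m (H n m) else p n m (H n m)
  | none => if b n then 0 else 1

/-- The next AoI vector: `1` upon reception, `τ n + 1` otherwise. -/
def nextAoI {N : ℕ} (τ : AoI N) (b : Fin N → Bool) : AoI N :=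
  fun n => if b n then 1 else τ n + 1

/-- The expected next-state value `∑_{s⁺} P(s⁺ | s, a) V(s⁺)`, where
`P((τ⁺,H⁺) | (τ,H), a) = (∏_n Pr(τ_n⁺ | τ_n, H, a_n)) · q(H⁺)`. -/
noncomputable def expNext {N M hh : ℕ} (p : Fin N → Fin M → Fin hh → ℝ)
    (q : Chan N M hh → ℝ) (V : MDPState N M hh → ℝ)
    (s : MDPState N M hh) (a : SchedAction N M) : ℝ :=
  ∑ Hp : Chan N M hh, ∑ b : Fin N → Bool,
    q Hp * (∏ n, devProb p s.2 a b n) * V (nextAoI s.1 b, Hp)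

/-- `Q(s,a) = r(s) + γ ∑_{s⁺} P(s⁺ | s, a) V(s⁺)` with reward
`r(s) = -∑_n g_n(τ_n)`. -/
noncomputable def Qval {N M hh : ℕ} (p : Fin N → Fin M → Fin hh → ℝ)
    (q : Chan N M hh → ℝ) (g : Fin N → ℕ+ → ℝ) (γ : ℝ)
    (V : MDPState N M hh → ℝ) (s : MDPState N M hh) (a : SchedAction N M) : ℝ :=
  (- ∑ n, g n (s.1 n)) + γ * expNext p q V s a

/-- `V` is AoI-antitone: increasing a single AoI coordinate (keeping everything
else fixed) cannot increase the value. -/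
def AoIAntitone {N M hh : ℕ} (V : MDPState N M hh → ℝ) : Prop :=
  ∀ (n : Fin N) (H : Chan N M hh) (τ τ' : AoI N),
    (∀ k, k ≠ n → τ' k = τ k) → τ n ≤ τ' n → V (τ', H) ≤ V (τ, H)

theorem devProb_nonneg {N M hh : ℕ} {p : Fin N → Fin M → Fin hh → ℝ}
    (hp0 : ∀ n m h, 0 ≤ p n m h) (hp1 : ∀ n m h, p n m h ≤ 1)
    (H : Chan N M hh) (a : SchedAction N M) (b : Fin N → Bool) (n : Fin N) :
    0 ≤ devProb p H a b n := by
  unfold devProb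
  split
  · split_ifs
    · exact sub_nonneg.2 (hp1 _ _ _)
    · exact hp0 _ _ _
  · split_ifs
    · exact le_rfl
    · exact zero_le_one

theorem nextAoI_mono {N : ℕ} {τ τ' : AoI N} {k : Fin N} (h : τ k ≤ τ' k) (b : Fin N → Bool) :
    nextAoI τ b k ≤ nextAoI τ' b k := by
  unfold nextAoI
  split_ifs
  · exact le_rfl
  · gcongr

theorem nextAoI_congr {N : ℕ} {τ τ' : AoI N} {k : Fin N} (h : τ k = τ' k) (b : Fin N → Bool) :
    nextAoI τ b k = nextAoI τ' b k := by
  simp only [nextAoI, h]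

/-- **Theorem 1** (monotonicity of the Q function w.r.t. AoI states).
If `V` is AoI-antitone, then for any feasible action `a`, any state `s = (τ, H)`,
any device `n` and any `τ'` agreeing with `τ` except `τ' n ≥ τ n`,
`Q((τ', H), a) ≤ Q((τ, H), a)`. -/
theorem q_antitone_in_aoi
    (N M hh : ℕ) (hMN : M < N)
    (p : Fin N → Fin M → Fin hh → ℝ)
    (hp0 : ∀ n m h, 0 ≤ p n m h) (hp1 : ∀ n m h, p n m h ≤ 1)
    (hpmono : ∀ n m, Monotone (p n m))
    (q : Chan N M hh → ℝ) (hq0 : ∀ H, 0 ≤ q H) (hq1 : ∑ H : Chan N M hh, q H = 1)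
    (g : Fin N → ℕ+ → ℝ) (hgpos : ∀ n τ, 0 < g n τ) (hgmono : ∀ n, Monotone (g n))
    (γ : ℝ) (hγ0 : 0 < γ) (hγ1 : γ < 1)
    (V : MDPState N M hh → ℝ) (hV : AoIAntitone V)
    (a : SchedAction N M) (ha : Feasible a)
    (τ τ' : AoI N) (H : Chan N M hh) (n : Fin N)
    (hagree : ∀ k, k ≠ n → τ' k = τ k) (hτ : τ n ≤ τ' n) :
    Qval p q g γ V (τ', H) a ≤ Qval p q g γ V (τ, H) a := by
  have hle : ∀ k, τ k ≤ τ' k := fun k => by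
    by_cases hk : k = n
    · exact hk ▸ hτ
    · exact (hagree k hk).ge
  unfold Qval expNext
  dsimp only
  refine add_le_add (neg_le_neg (Finset.sum_le_sum fun k _ => hgmono k (hle k)))
    (mul_le_mul_of_nonneg_left ?_ hγ0.le)
  refine Finset.sum_le_sum fun Hp _ => Finset.sum_le_sum fun b _ =>
    mul_le_mul_of_nonneg_left ?_ <|
      mul_nonneg (hq0 Hp) (Finset.prod_nonneg fun k _ => devProb_nonneg hp0 hp1 H a b k)
  exact hV n Hp _ _ (fun k hk => nextAoI_congr (hagree k hk) b) (nextAoI_mono hτ b)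
end

section
/- (Theorem 2(i), monotonicity of the Q function with respect to the channel state of a utilized channel.) Suppose V is AoI-antitone. Let a be a feasible action with a_n = m for some channel m ≥ 1, let s = (τ, H), and let s'_Ch = (τ, H'_{n,m}) where H'_{n,m} is identical to H except that its (n,m)-entry satisfies h'_{n,m} > h_{n,m}. Then Q(s'_Ch, a) ≤ Q(s, a). -/
/-- Summing over all flag vectors the two values obtained by forcing the flag at `i`
counts every flag vector twice. -/
theorem sum_update_true_add_update_false {ι : Type*} [Fintype ι] [DecidableEq ι]
    (i : ι) (f : (ι → Bool) → ℝ) :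
    ∑ b, (f (Function.update b i true) + f (Function.update b i false)) = 2 * ∑ b, f b := by
  have hinv : Function.Involutive fun b : ι → Bool => Function.update b i (!b i) := by
    intro b
    simp
  have hflip : ∑ b, f (Function.update b i (!b i)) = ∑ b, f b :=
    Equiv.sum_comp hinv.toPerm f
  have hpair : ∀ b : ι → Bool,
      f (Function.update b i true) + f (Function.update b i false)
        = f b + f (Function.update b i (!b i)) := by
    intro b
    have hself := Function.update_eq_self i b
    cases hb : b i <;> rw [hb] at hself <;> simp [hself, add_comm]
  rw [Finset.sum_congr rfl fun b _ => hpair b, Finset.sum_add_distrib, hflip, two_mul]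

theorem devProb_congr {N M hh : ℕ} (p : Fin N → Fin M → Fin hh → ℝ)
    {H H' : Chan N M hh} (a : SchedAction N M) {b b' : Fin N → Bool} {k : Fin N}
    (hH : H k = H' k) (hb : b k = b' k) :
    devProb p H a b k = devProb p H' a b' k := by
  unfold devProb
  rw [hH, hb]

/-- Splits off the factor of a transmitting device whose success flag is forced. -/
theorem prod_devProb_update {N M hh : ℕ} (p : Fin N → Fin M → Fin hh → ℝ)
    (H : Chan N M hh) (a : SchedAction N M) (b : Fin N → Bool) {n : Fin N} {m : Fin M}
    (han : a n = some m) (c : Bool) :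
    ∏ k, devProb p H a (Function.update b n c) k
      = (if c then 1 - p n m (H n m) else p n m (H n m))
        * ∏ k ∈ Finset.univ.erase n, devProb p H a b k := by
  rw [← Finset.mul_prod_erase _ _ (Finset.mem_univ n)]
  congr 1
  · simp [devProb, han]
  · refine Finset.prod_congr rfl fun k hk => devProb_congr p a rfl ?_
    exact Function.update_of_ne (Finset.ne_of_mem_erase hk) _ _

theorem AoIAntitone.nextAoI_update_le {N M hh : ℕ} {V : MDPState N M hh → ℝ}
    (hV : AoIAntitone V) (τ : AoI N) (b : Fin N → Bool) (n : Fin N) (H : Chan N M hh) :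
    V (nextAoI τ (Function.update b n false), H)
      ≤ V (nextAoI τ (Function.update b n true), H) := by
  refine hV n H _ _ (fun k hk => ?_) ?_
  · simp [nextAoI, Function.update_of_ne hk]
  · simp [nextAoI]

/-- **Theorem 2(i)** (monotonicity of the Q function w.r.t. the channel state of a
utilized channel). If `V` is AoI-antitone, `a` is feasible with `a n = some m`, and
`H'` is identical to `H` except `H' n m > H n m`, then `Q((τ, H'), a) ≤ Q((τ, H), a)`. -/
theorem q_antitone_in_used_channel
    (N M hh : ℕ) (hMN : M < N)
    (p : Fin N → Fin M → Fin hh → ℝ)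
    (hp0 : ∀ n m h, 0 ≤ p n m h) (hp1 : ∀ n m h, p n m h ≤ 1)
    (hpmono : ∀ n m, Monotone (p n m))
    (q : Chan N M hh → ℝ) (hq0 : ∀ H, 0 ≤ q H) (hq1 : ∑ H : Chan N M hh, q H = 1)
    (g : Fin N → ℕ+ → ℝ) (hgpos : ∀ n τ, 0 < g n τ) (hgmono : ∀ n, Monotone (g n))
    (γ : ℝ) (hγ0 : 0 < γ) (hγ1 : γ < 1)
    (V : MDPState N M hh → ℝ) (hV : AoIAntitone V)
    (a : SchedAction N M) (ha : Feasible a)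
    (n : Fin N) (m : Fin M) (han : a n = some m)
    (τ : AoI N) (H H' : Chan N M hh)
    (hagree : ∀ k l, (k, l) ≠ (n, m) → H' k l = H k l)
    (hH : H n m < H' n m) :
    Qval p q g γ V (τ, H') a ≤ Qval p q g γ V (τ, H) a := by
  have hrow : ∀ k, k ≠ n → H' k = H k := fun k hk =>
    funext fun l => hagree k l fun h => hk (Prod.ext_iff.mp h).1
  have hp : p n m (H n m) ≤ p n m (H' n m) := hpmono n m hH.le
  unfold Qval expNext
  dsimp only
  gcongr _ + γ * ?_
  refine Finset.sum_le_sum fun Hp _ => ?_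
  refine le_of_mul_le_mul_left ?_ (two_pos (α := ℝ))
  rw [← sum_update_true_add_update_false n, ← sum_update_true_add_update_false n]
  refine Finset.sum_le_sum fun b _ => ?_
  have hrest : ∏ k ∈ Finset.univ.erase n, devProb p H' a b k
      = ∏ k ∈ Finset.univ.erase n, devProb p H a b k :=
    Finset.prod_congr rfl fun k hk =>
      devProb_congr p a (hrow k (Finset.ne_of_mem_erase hk)) rfl
  simp only [prod_devProb_update p _ a b han, hrest, if_true, Bool.false_eq_true, if_false]
  have hR : 0 ≤ ∏ k ∈ Finset.univ.erase n, devProb p H a b k :=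
    Finset.prod_nonneg fun k _ => devProb_nonneg hp0 hp1 H a b k
  have hVle := hV.nextAoI_update_le τ b n Hp
  have hgain := mul_nonneg (mul_nonneg (hq0 Hp) hR)
    (mul_nonneg (sub_nonneg.mpr hp) (sub_nonneg.mpr hVle))
  linarith
end

section
/- (Key step in the proof of Theorem 1.) Suppose V is AoI-antitone. Then for every feasible action a, every channel matrix H, and every device index n, the expected next-state value is nonincreasing in the n-th AoI coordinate: if τ and τ'_(n) agree in all coordinates except that τ'_n ≥ τ_n, then ∑_{s⁺} P(s⁺ | (τ'_(n), H), a) V(s⁺) ≤ ∑_{s⁺} P(s⁺ | (τ, H), a) V(s⁺). -/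
theorem nextAoI_apply_congr {N : ℕ} {τ τ' : AoI N} {n : Fin N} (b : Fin N → Bool)
    (h : τ' n = τ n) : nextAoI τ' b n = nextAoI τ b n := by
  simp only [nextAoI, h]

theorem nextAoI_apply_mono {N : ℕ} {τ τ' : AoI N} {n : Fin N} (b : Fin N → Bool)
    (h : τ n ≤ τ' n) : nextAoI τ b n ≤ nextAoI τ' b n := by
  unfold nextAoI
  split_ifs
  · exact le_rfl
  · gcongr

/-- **Key step in the proof of Theorem 1.** If `V` is AoI-antitone, then the expected
next-state value `∑_{s⁺} P(s⁺ | s, a) V(s⁺)` is nonincreasing in the `n`-th AoI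
coordinate of the current state. -/
theorem expNext_antitone_in_aoi
    (N M hh : ℕ) (hMN : M < N)
    (p : Fin N → Fin M → Fin hh → ℝ)
    (hp0 : ∀ n m h, 0 ≤ p n m h) (hp1 : ∀ n m h, p n m h ≤ 1)
    (hpmono : ∀ n m, Monotone (p n m))
    (q : Chan N M hh → ℝ) (hq0 : ∀ H, 0 ≤ q H) (hq1 : ∑ H : Chan N M hh, q H = 1)
    (V : MDPState N M hh → ℝ) (hV : AoIAntitone V)
    (a : SchedAction N M) (ha : Feasible a)
    (H : Chan N M hh) (n : Fin N) (τ τ' : AoI N)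
    (hagree : ∀ k, k ≠ n → τ' k = τ k) (hτ : τ n ≤ τ' n) :
    expNext p q V (τ', H) a ≤ expNext p q V (τ, H) a := by
  refine Finset.sum_le_sum fun Hp _ => Finset.sum_le_sum fun b _ =>
    mul_le_mul_of_nonneg_left ?_ ?_
  · exact hV n Hp _ _ (fun k hk => nextAoI_apply_congr b (hagree k hk))
      (nextAoI_apply_mono b hτ)
  · exact mul_nonneg (hq0 Hp)
      (Finset.prod_nonneg fun k _ => devProb_nonneg hp0 hp1 H a b k)
end

section
/- (Combined partial monotonicity of the Q function, corollary of Theorems 1 and 2.) Suppose V is AoI-antitone. Let a be a feasible action and let s = (τ, H) and s' = (τ', H') be states with τ'_n ≥ τ_n for every device n and h'_{n,m} ≥ h_{n,m} for every device n and channel m. Then Q(s', a) ≤ Q(s, a). -/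
/-- A single-coordinate antitone value function is antitone for the product order on
AoI vectors. -/
lemma AoIAntitone.le_of_le {N M hh : ℕ} {V : MDPState N M hh → ℝ} (hV : AoIAntitone V)
    (H : Chan N M hh) {τ τ' : AoI N} (h : τ ≤ τ') : V (τ', H) ≤ V (τ, H) := by
  have key : ∀ S : Finset (Fin N), V (S.piecewise τ' τ, H) ≤ V (τ, H) := by
    intro S
    induction S using Finset.induction_on with
    | empty => simp
    | insert n S hn ih =>
      refine le_trans (hV n H _ _ (fun k hk => ?_) ?_) ih
      · simp [Finset.piecewise, hk]
      · simpa [Finset.piecewise, hn] using h n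
  simpa using key Finset.univ

/-- The next AoI vector increases with the current one and decreases with receptions. -/
lemma nextAoI_le_nextAoI {N : ℕ} {τ τ' : AoI N} {b b' : Fin N → Bool}
    (hτ : τ ≤ τ') (hb : b ≤ b') : nextAoI τ b' ≤ nextAoI τ' b := by
  intro n
  have hn := hb n
  unfold nextAoI
  cases h : b n <;> cases h' : b' n
  · simpa using hτ n
  · simp
  · exact absurd (hn h) (by simp [h'])
  · simp

/-- Expectation of `f` over independent Bernoulli flags with success probabilities `x`. -/
def bernoulliExp {N : ℕ} (x : Fin N → ℝ) (f : (Fin N → Bool) → ℝ) : ℝ :=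
  ∑ b : Fin N → Bool, (∏ n, if b n then x n else 1 - x n) * f b

lemma bernoulliExp_succ {N : ℕ} (x : Fin (N + 1) → ℝ) (f : (Fin (N + 1) → Bool) → ℝ) :
    bernoulliExp x f =
      x 0 * bernoulliExp (fun n => x n.succ) (fun b => f (Fin.cons true b)) +
        (1 - x 0) * bernoulliExp (fun n => x n.succ) (fun b => f (Fin.cons false b)) := by
  unfold bernoulliExp
  rw [← (Fin.consEquiv fun _ : Fin (N + 1) => Bool).sum_comp, Fintype.sum_prod_type,
    Fintype.sum_bool, Finset.mul_sum, Finset.mul_sum]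
  simp [Fin.consEquiv, Fin.prod_univ_succ, mul_assoc]

lemma bernoulliExp_le_of_le {N : ℕ} {x : Fin N → ℝ} (hx0 : ∀ n, 0 ≤ x n) (hx1 : ∀ n, x n ≤ 1)
    {f f' : (Fin N → Bool) → ℝ} (h : ∀ b, f b ≤ f' b) :
    bernoulliExp x f ≤ bernoulliExp x f' := by
  refine Finset.sum_le_sum fun b _ => mul_le_mul_of_nonneg_left (h b) ?_
  refine Finset.prod_nonneg fun n _ => ?_
  split_ifs
  · exact hx0 n
  · linarith [hx1 n]

/-- Stochastic dominance: the expectation of a monotone function of independent Bernoulli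
flags increases with the success probabilities. -/
lemma bernoulliExp_mono {N : ℕ} {x y : Fin N → ℝ} (hx0 : ∀ n, 0 ≤ x n) (hxy : ∀ n, x n ≤ y n)
    (hy1 : ∀ n, y n ≤ 1) {f : (Fin N → Bool) → ℝ} (hf : Monotone f) :
    bernoulliExp x f ≤ bernoulliExp y f := by
  induction N with
  | zero => simp [bernoulliExp]
  | succ N ih =>
    have cons_mono : ∀ c : Bool, Monotone fun b : Fin N → Bool =>
        f (Fin.cons (α := fun _ => Bool) c b) :=
      fun c b b' hb => hf (Fin.cons_le_cons.2 ⟨le_rfl, hb⟩)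
    have tail_le := fun c => ih (fun n => hx0 n.succ) (fun n => hxy n.succ)
      (fun n => hy1 n.succ) (cons_mono c)
    have false_le_true : bernoulliExp (fun n => y n.succ)
          (fun b => f (Fin.cons (α := fun _ => Bool) false b)) ≤
        bernoulliExp (fun n => y n.succ) (fun b => f (Fin.cons (α := fun _ => Bool) true b)) :=
      bernoulliExp_le_of_le (fun n => (hx0 n.succ).trans (hxy n.succ)) (fun n => hy1 n.succ)
        fun b => hf (Fin.cons_le_cons.2 ⟨Bool.false_le _, le_rfl⟩)
    rw [bernoulliExp_succ, bernoulliExp_succ]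
    have h1 := mul_le_mul_of_nonneg_left (tail_le true) (hx0 0)
    have h2 := mul_le_mul_of_nonneg_left (tail_le false)
      (sub_nonneg.2 ((hxy 0).trans (hy1 0)))
    have h3 := mul_le_mul_of_nonneg_left false_le_true (sub_nonneg.2 (hxy 0))
    linarith

/-- The reception probability of device `n`; idle devices never succeed. -/
def successProb {N M hh : ℕ} (p : Fin N → Fin M → Fin hh → ℝ)
    (H : Chan N M hh) (a : SchedAction N M) (n : Fin N) : ℝ :=
  (a n).elim 0 fun m => 1 - p n m (H n m)

lemma devProb_eq_ite_successProb {N M hh : ℕ} (p : Fin N → Fin M → Fin hh → ℝ)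
    (H : Chan N M hh) (a : SchedAction N M) (b : Fin N → Bool) (n : Fin N) :
    devProb p H a b n = if b n then successProb p H a n else 1 - successProb p H a n := by
  unfold devProb successProb
  cases a n <;> simp

lemma expNext_eq_sum_bernoulliExp {N M hh : ℕ} (p : Fin N → Fin M → Fin hh → ℝ)
    (q : Chan N M hh → ℝ) (V : MDPState N M hh → ℝ)
    (s : MDPState N M hh) (a : SchedAction N M) :
    expNext p q V s a =
      ∑ Hp, q Hp * bernoulliExp (successProb p s.2 a) fun b => V (nextAoI s.1 b, Hp) := by
  simp only [expNext, bernoulliExp, devProb_eq_ite_successProb, Finset.mul_sum, mul_assoc]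

/-- **Combined partial monotonicity of the Q function** (corollary of Theorems 1
and 2). If `V` is AoI-antitone, `a` is feasible, `τ' n ≥ τ n` for every device `n`
and `H' n m ≥ H n m` for every device `n` and channel `m`, then
`Q((τ', H'), a) ≤ Q((τ, H), a)`. -/
theorem q_partially_monotone
    (N M hh : ℕ) (hMN : M < N)
    (p : Fin N → Fin M → Fin hh → ℝ)
    (hp0 : ∀ n m h, 0 ≤ p n m h) (hp1 : ∀ n m h, p n m h ≤ 1)
    (hpmono : ∀ n m, Monotone (p n m))
    (q : Chan N M hh → ℝ) (hq0 : ∀ H, 0 ≤ q H) (hq1 : ∑ H : Chan N M hh, q H = 1)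
    (g : Fin N → ℕ+ → ℝ) (hgpos : ∀ n τ, 0 < g n τ) (hgmono : ∀ n, Monotone (g n))
    (γ : ℝ) (hγ0 : 0 < γ) (hγ1 : γ < 1)
    (V : MDPState N M hh → ℝ) (hV : AoIAntitone V)
    (a : SchedAction N M) (ha : Feasible a)
    (τ τ' : AoI N) (H H' : Chan N M hh)
    (hτ : ∀ n, τ n ≤ τ' n) (hH : ∀ n m, H n m ≤ H' n m) :
    Qval p q g γ V (τ', H') a ≤ Qval p q g γ V (τ, H) a := by
  have success_nonneg : ∀ G n, 0 ≤ successProb p G a n := by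
    intro G n
    unfold successProb
    cases a n <;> simp [hp1]
  have success_le_one : ∀ G n, successProb p G a n ≤ 1 := by
    intro G n
    unfold successProb
    cases a n <;> simp [hp0]
  have success_anti : ∀ n, successProb p H' a n ≤ successProb p H a n := by
    intro n
    unfold successProb
    cases a n with
    | none => simp
    | some m => exact sub_le_sub_left (hpmono n m (hH n m)) 1
  have cost_le : ∑ n, g n (τ n) ≤ ∑ n, g n (τ' n) :=
    Finset.sum_le_sum fun n _ => hgmono n (hτ n)
  have next_le : expNext p q V (τ', H') a ≤ expNext p q V (τ, H) a := by
    rw [expNext_eq_sum_bernoulliExp, expNext_eq_sum_bernoulliExp]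
    refine Finset.sum_le_sum fun Hp _ => mul_le_mul_of_nonneg_left ?_ (hq0 Hp)
    calc
      _ ≤ bernoulliExp (successProb p H' a) fun b => V (nextAoI τ b, Hp) :=
        bernoulliExp_le_of_le (success_nonneg H') (success_le_one H')
          fun b => hV.le_of_le Hp (nextAoI_le_nextAoI hτ le_rfl)
      _ ≤ _ := bernoulliExp_mono (success_nonneg H') success_anti (success_le_one H)
          fun b b' hb => hV.le_of_le Hp (nextAoI_le_nextAoI le_rfl hb)
  exact add_le_add (neg_le_neg cost_le) (mul_le_mul_of_nonneg_left next_le hγ0.le)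
end
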